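/- Let ν be a complex Borel measure on ℝ such that ∫_ℝ (λ − x)^{-2} dν(x) = 0 for every λ with Im λ < 0. Then ν is absolutely continuous with respect to Lebesgue measure. -/

import Mathlib

open MeasureTheory

/-- Bounded measurable densities whose Cauchy transform vanishes on the lower half-plane. -/
def GoodDensity (σ : Measure ℝ) (h : ℝ → ℂ) : Prop :=
  Measurable h ∧ (∃ B : ℝ, ∀ x, ‖h x‖ ≤ B) ∧
    ∀ lam : ℂ, lam.im < 0 → ∫ x : ℝ, h x / (lam - (x : ℂ)) ∂σ = 0

lemma im_le_norm_sub (lam : ℂ) (x : ℝ) : -lam.im ≤ ‖lam - (x : ℂ)‖ := by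
  have h := Complex.abs_im_le_norm (lam - (x : ℂ))
  have h2 := neg_abs_le (lam - (x : ℂ)).im
  simp at h h2
  linarith

lemma sub_ne_zero_of_im (lam : ℂ) (hl : lam.im < 0) (x : ℝ) : lam - (x : ℂ) ≠ 0 := by
  have := im_le_norm_sub lam x
  rw [← norm_pos_iff]
  linarith

lemma norm_div_le_of_im {h : ℂ} {B : ℝ} (hB : ‖h‖ ≤ B) (lam : ℂ) (hl : lam.im < 0) (x : ℝ)
    {c : ℝ} (hc : 0 < c) (hcl : c ≤ -lam.im) :
    ‖h / (lam - (x : ℂ))‖ ≤ B / c := by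
  have := im_le_norm_sub lam x
  rw [norm_div]
  exact div_le_div₀ ((norm_nonneg _).trans hB) hB hc (by linarith)

lemma meas_div {h : ℝ → ℂ} (hm : Measurable h) (lam : ℂ) :
    Measurable (fun x : ℝ => h x / (lam - (x : ℂ))) :=
  hm.div (measurable_const.sub Complex.measurable_ofReal)

lemma integrable_bdd (σ : Measure ℝ) [IsFiniteMeasure σ] {h : ℝ → ℂ} (hm : Measurable h)
    {B : ℝ} (hB : ∀ x, ‖h x‖ ≤ B) : Integrable h σ :=
  Integrable.of_bound hm.aestronglyMeasurable B (Filter.Eventually.of_forall hB)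

lemma GoodDensity.div {σ : Measure ℝ} [IsFiniteMeasure σ] {h : ℝ → ℂ} (hh : GoodDensity σ h)
    (mu : ℂ) (hmu : mu.im < 0) : GoodDensity σ (fun x => h x / (mu - (x : ℂ))) := by
  obtain ⟨hm, ⟨B, hB⟩, hz⟩ := hh
  have hB1 : ∀ x, ‖h x / (mu - (x : ℂ))‖ ≤ B / (-mu.im) := fun x =>
    norm_div_le_of_im (hB x) mu hmu x (by linarith) le_rfl
  have key : ∀ lam : ℂ, lam.im < 0 → lam ≠ mu →
      ∫ x : ℝ, h x / (mu - (x : ℂ)) / (lam - (x : ℂ)) ∂σ = 0 := by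
    intro lam hl hne
    have hne' : lam - mu ≠ 0 := sub_ne_zero.2 hne
    have e : ∀ x : ℝ, h x / (mu - (x : ℂ)) / (lam - (x : ℂ)) =
        (lam - mu)⁻¹ * (h x / (mu - (x : ℂ)) - h x / (lam - (x : ℂ))) := by
      intro x
      have h1 := sub_ne_zero_of_im mu hmu x
      have h2 := sub_ne_zero_of_im lam hl x
      field_simp
      ring
    simp_rw [e]
    rw [integral_const_mul, integral_sub, hz mu hmu, hz lam hl]
    · simp
    · exact integrable_bdd σ (meas_div hm mu) hB1
    · exact integrable_bdd σ (meas_div hm lam) (fun x =>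
        norm_div_le_of_im (hB x) lam hl x (c := -lam.im) (by linarith) le_rfl)
  refine ⟨meas_div hm mu, ⟨_, hB1⟩, ?_⟩
  intro lam hl
  by_cases hne : lam = mu
  swap
  · exact key lam hl hne
  subst hne
  -- approximate by a sequence
  let u : ℕ → ℂ := fun n => lam - Complex.I * ((1 / ((n : ℝ) + 1) : ℝ) : ℂ)
  have hpos : ∀ n : ℕ, 0 < 1 / ((n : ℝ) + 1) := fun n => by positivity
  have hu_im : ∀ n, (u n).im = lam.im - 1 / ((n : ℝ) + 1) := by
    intro n
    simp only [u, Complex.sub_im, Complex.I_mul_im, Complex.ofReal_re]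
  have hu_lim : Filter.Tendsto u Filter.atTop (nhds lam) := by
    have h0 : Filter.Tendsto (fun n : ℕ => ((1 / ((n : ℝ) + 1) : ℝ) : ℂ)) Filter.atTop
        (nhds ((0 : ℝ) : ℂ)) :=
      (Complex.continuous_ofReal.tendsto 0).comp tendsto_one_div_add_atTop_nhds_zero_nat
    have h1 := (h0.const_mul Complex.I).const_sub lam
    rw [Complex.ofReal_zero, mul_zero, sub_zero] at h1
    exact h1
  have hlim := tendsto_integral_of_dominated_convergence (μ := σ)
    (F := fun n (x : ℝ) => h x / (lam - (x : ℂ)) / (u n - (x : ℂ)))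
    (f := fun x : ℝ => h x / (lam - (x : ℂ)) / (lam - (x : ℂ)))
    (fun _ => B / (-lam.im) / (-lam.im))
    (fun n => (meas_div (meas_div hm lam) (u n)).aestronglyMeasurable)
    (integrable_const _)
    (fun n => Filter.Eventually.of_forall (fun x => by
      have h1 := hu_im n
      have h2 := hpos n
      exact norm_div_le_of_im (hB1 x) (u n) (by linarith) x (by linarith) (by linarith)))
    (Filter.Eventually.of_forall (fun x => by
      exact tendsto_const_nhds.div (hu_lim.sub tendsto_const_nhds)
        (sub_ne_zero_of_im lam hl x)))
  refine tendsto_nhds_unique hlim ?_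
  have : ∀ n, ∫ x : ℝ, h x / (lam - (x : ℂ)) / (u n - (x : ℂ)) ∂σ = 0 := by
    intro n
    have h1 := hu_im n
    have h2 := hpos n
    refine key (u n) (by linarith) ?_
    intro hc
    rw [hc] at h1
    linarith
  simp only [this]
  exact tendsto_const_nhds

lemma GoodDensity.const_mul {σ : Measure ℝ} {h : ℝ → ℂ} (hh : GoodDensity σ h) (c : ℂ) :
    GoodDensity σ (fun x => c * h x) := by
  obtain ⟨hm, ⟨B, hB⟩, hz⟩ := hh
  refine ⟨hm.const_mul c, ⟨‖c‖ * B, fun x => ?_⟩, fun lam hl => ?_⟩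
  · rw [norm_mul]
    exact mul_le_mul_of_nonneg_left (hB x) (norm_nonneg _)
  · simp_rw [mul_div_assoc]
    rw [integral_const_mul, hz lam hl, mul_zero]

lemma GoodDensity.sum {σ : Measure ℝ} [IsFiniteMeasure σ] {h : ℝ → ℝ → ℂ} (t : Finset ℝ)
    (hh : ∀ a ∈ t, GoodDensity σ (h a)) :
    GoodDensity σ (fun x => ∑ a ∈ t, h a x) := by
  classical
  induction t using Finset.induction_on with
  | empty => exact ⟨by simp, ⟨0, by simp⟩, by simp⟩
  | insert a s ha ih =>
    obtain ⟨m1, ⟨B1, b1⟩, z1⟩ := hh a (by simp)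
    obtain ⟨m2, ⟨B2, b2⟩, z2⟩ := ih (fun b hb => hh b (by simp [hb]))
    simp only [Finset.sum_insert ha]
    refine ⟨m1.add m2, ⟨B1 + B2, fun x => (norm_add_le _ _).trans (add_le_add (b1 x) (b2 x))⟩,
      fun lam hl => ?_⟩
    simp_rw [add_div]
    rw [integral_add, z1 lam hl, z2 lam hl, add_zero]
    · exact integrable_bdd σ (meas_div m1 lam) (fun x =>
        norm_div_le_of_im (b1 x) lam hl x (c := -lam.im) (by linarith) le_rfl)
    · exact integrable_bdd σ (meas_div m2 lam) (fun x =>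
        norm_div_le_of_im (b2 x) lam hl x (c := -lam.im) (by linarith) le_rfl)

/-- A finite combination of simple fractions with poles in the lower half-plane. -/
noncomputable def fracSum (t : Finset ℝ) (c lam : ℝ → ℂ) (x : ℝ) : ℂ :=
  ∑ a ∈ t, c a / (lam a - (x : ℂ))

lemma meas_fracSum (t : Finset ℝ) (c lam : ℝ → ℂ) : Measurable (fracSum t c lam) := by
  unfold fracSum
  exact Finset.measurable_sum _ (fun a _ => meas_div measurable_const _)

lemma GoodDensity.mul_fracSum {σ : Measure ℝ} [IsFiniteMeasure σ] {h : ℝ → ℂ}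
    (hh : GoodDensity σ h) (t : Finset ℝ) (c lam : ℝ → ℂ) (hl : ∀ a ∈ t, (lam a).im < 0) :
    GoodDensity σ (fun x => h x * fracSum t c lam x) := by
  have := GoodDensity.sum (σ := σ) (h := fun a x => c a * (h x / (lam a - (x : ℂ)))) t
    (fun a ha => (hh.div (lam a) (hl a ha)).const_mul (c a))
  convert this using 2 with x
  rw [fracSum, Finset.mul_sum]
  exact Finset.sum_congr rfl (fun a _ => by ring)

lemma GoodDensity.integral_mul_fracSum {σ : Measure ℝ} [IsFiniteMeasure σ] {h : ℝ → ℂ}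
    (hh : GoodDensity σ h) (t : Finset ℝ) (c lam : ℝ → ℂ) (hl : ∀ a ∈ t, (lam a).im < 0) :
    ∫ x, h x * fracSum t c lam x ∂σ = 0 := by
  have e : ∀ x : ℝ, h x * fracSum t c lam x = ∑ a ∈ t, c a * (h x / (lam a - (x : ℂ))) := by
    intro x
    rw [fracSum, Finset.mul_sum]
    exact Finset.sum_congr rfl (fun a _ => by ring)
  simp_rw [e]
  rw [integral_finsetSum]
  · refine Finset.sum_eq_zero (fun a ha => ?_)
    rw [integral_const_mul, hh.2.2 _ (hl a ha), mul_zero]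
  · intro a ha
    obtain ⟨m, ⟨B, b⟩, -⟩ := (hh.div (lam a) (hl a ha)).const_mul (c a)
    exact integrable_bdd σ m b

lemma GoodDensity.mul_pow {σ : Measure ℝ} [IsFiniteMeasure σ] {h : ℝ → ℂ}
    (hh : GoodDensity σ h) (t : Finset ℝ) (c lam : ℝ → ℂ) (hl : ∀ a ∈ t, (lam a).im < 0)
    (k : ℕ) : GoodDensity σ (fun x => h x * fracSum t c lam x ^ k) := by
  induction k with
  | zero => simpa using hh
  | succ k ih =>
    have := ih.mul_fracSum t c lam hl
    simpa only [pow_succ, mul_assoc] using this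

lemma GoodDensity.integral_exp {σ : Measure ℝ} [IsFiniteMeasure σ] {h : ℝ → ℂ}
    (hh : GoodDensity σ h) (t : Finset ℝ) (c lam : ℝ → ℂ) (hl : ∀ a ∈ t, (lam a).im < 0) :
    ∫ x, h x * Complex.exp (fracSum t c lam x) ∂σ = ∫ x, h x ∂σ := by
  obtain ⟨hm, ⟨B, hB⟩, hz⟩ := id hh
  obtain ⟨C, hC⟩ : ∃ C : ℝ, ∀ x, ‖fracSum t c lam x‖ ≤ C := by
    refine ⟨∑ a ∈ t, ‖c a‖ / (-(lam a).im), fun x => ?_⟩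
    refine (norm_sum_le _ _).trans (Finset.sum_le_sum fun a ha => ?_)
    have := hl a ha
    exact norm_div_le_of_im le_rfl _ this x (by linarith) le_rfl
  have hB0 : 0 ≤ B := (norm_nonneg _).trans (hB 0)
  have hC0 : 0 ≤ C := (norm_nonneg _).trans (hC 0)
  have hs := hasSum_integral_of_dominated_convergence (μ := σ)
    (F := fun (k : ℕ) x => h x * (fracSum t c lam x ^ k / (k.factorial : ℂ)))
    (f := fun x => h x * Complex.exp (fracSum t c lam x))
    (fun k _ => B * (C ^ k / (k.factorial : ℝ)))
    (fun k => (hm.mul (((meas_fracSum t c lam).pow_const k).div_const _)).aestronglyMeasurable)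
    (fun k => Filter.Eventually.of_forall (fun x => by
      rw [norm_mul, norm_div, norm_pow, Complex.norm_natCast]
      have := hB x
      have := hC x
      gcongr))
    (Filter.Eventually.of_forall (fun x => (Real.summable_pow_div_factorial C).mul_left B))
    (integrable_const _)
    (Filter.Eventually.of_forall (fun x => by
      have := NormedSpace.expSeries_div_hasSum_exp (fracSum t c lam x)
      rw [← Complex.exp_eq_exp_ℂ] at this
      exact this.mul_left (h x)))
  have h0 : ∀ k : ℕ, k ≠ 0 →
      ∫ x, h x * (fracSum t c lam x ^ k / (k.factorial : ℂ)) ∂σ = 0 := by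
    intro k hk
    obtain ⟨j, rfl⟩ := Nat.exists_eq_succ_of_ne_zero hk
    have e : ∀ x, h x * (fracSum t c lam x ^ (j + 1) / ((j + 1).factorial : ℂ)) =
        (((j + 1).factorial : ℂ))⁻¹ * ((h x * fracSum t c lam x ^ j) * fracSum t c lam x) := by
      intro x
      rw [pow_succ]
      ring
    simp only [Nat.succ_eq_add_one, e]
    rw [integral_const_mul, (hh.mul_pow t c lam hl j).integral_mul_fracSum t c lam hl, mul_zero]
  have hs' := hasSum_single 0 h0
  have := hs.unique hs'
  simpa using this

lemma good_of_sq (σ : Measure ℝ) [IsFiniteMeasure σ] (g : ℝ → ℂ) (hg : Measurable g)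
    (hgbd : ∀ x, ‖g x‖ ≤ 1)
    (hcauchy : ∀ lam : ℂ, lam.im < 0 → ∫ x : ℝ, g x / (lam - (x : ℂ)) ^ 2 ∂σ = 0) :
    GoodDensity σ g := by
  refine ⟨hg, ⟨1, hgbd⟩, ?_⟩
  set S : Set ℂ := {z | z.im < 0} with hS
  have hSo : IsOpen S := isOpen_lt Complex.continuous_im continuous_const
  have hSc : IsPreconnected S := (convex_halfSpace_im_lt 0).isPreconnected
  set f : ℂ → ℂ := fun lam => ∫ x : ℝ, g x / (lam - (x : ℂ)) ∂σ with hf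
  have hder : ∀ z ∈ S, HasDerivAt f 0 z := by
    intro z hz
    have hz' : z.im < 0 := hz
    have hb : ∀ w : ℂ, w.im < z.im / 2 → w.im < 0 := fun w hw => by linarith
    have h := hasDerivAt_integral_of_dominated_loc_of_deriv_le (μ := σ) (𝕜 := ℂ)
      (F := fun (w : ℂ) (x : ℝ) => g x / (w - (x : ℂ)))
      (F' := fun (w : ℂ) (x : ℝ) => -(g x / (w - (x : ℂ)) ^ 2))
      (x₀ := z) (s := {w : ℂ | w.im < z.im / 2})
      (bound := fun _ => 1 / (-(z.im / 2)) / (-(z.im / 2)))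
      ((isOpen_lt Complex.continuous_im continuous_const).mem_nhds
        (show z.im < z.im / 2 by linarith))
      (Filter.Eventually.of_forall (fun w => (meas_div hg w).aestronglyMeasurable))
      (integrable_bdd σ (meas_div hg z) (fun x =>
        norm_div_le_of_im (hgbd x) z hz' x (c := -z.im) (by linarith) le_rfl))
      ((hg.div ((measurable_const.sub Complex.measurable_ofReal).pow_const 2)).neg.aestronglyMeasurable)
      (Filter.Eventually.of_forall (fun x w hw => by
        have hw' : w.im < z.im / 2 := hw
        rw [norm_neg, pow_two, ← div_div]
        have hc : 0 < -(z.im / 2) := by linarith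
        exact norm_div_le_of_im (norm_div_le_of_im (hgbd x) w (hb w hw) x hc (by linarith))
          w (hb w hw) x hc (by linarith)))
      (integrable_const _)
      (Filter.Eventually.of_forall (fun x w hw => by
        have hne := sub_ne_zero_of_im w (hb w hw) x
        have h1 : HasDerivAt (fun w : ℂ => w - (x : ℂ)) 1 w := (hasDerivAt_id w).sub_const _
        have h2 := (hasDerivAt_const w (g x)).div h1 hne
        have e : (0 * (w - (x : ℂ)) - g x * 1) / (w - (x : ℂ)) ^ 2 =
            -(g x / (w - (x : ℂ)) ^ 2) := by ring
        rw [e] at h2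
        exact h2))
    have h2 := h.2
    rw [integral_neg, hcauchy z hz', neg_zero] at h2
    exact h2
  have hconst : ∀ z ∈ S, ∀ w ∈ S, f z = f w := fun z hz w hw =>
    hSo.is_const_of_deriv_eq_zero hSc
      (fun y hy => (hder y hy).differentiableAt.differentiableWithinAt)
      (fun y hy => (hder y hy).deriv) hz hw
  intro lam hl
  have hle : ∀ n : ℕ, ‖f lam‖ ≤ 1 / ((n : ℝ) + 1) * σ.real Set.univ := by
    intro n
    have him : (-(Complex.I * (((n : ℝ) + 1 : ℝ) : ℂ))).im = -((n : ℝ) + 1) := by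
      simp only [Complex.neg_im, Complex.I_mul_im, Complex.ofReal_re]
    have hp : (0 : ℝ) < (n : ℝ) + 1 := by positivity
    rw [hconst lam hl (-(Complex.I * (((n : ℝ) + 1 : ℝ) : ℂ)))
      (by rw [hS, Set.mem_ofPred_eq, him]; linarith)]
    exact norm_integral_le_of_norm_le_const (Filter.Eventually.of_forall (fun x =>
      norm_div_le_of_im (hgbd x) _ (by rw [him]; linarith) x hp (by rw [him]; linarith)))
  have hlim := (tendsto_one_div_add_atTop_nhds_zero_nat (𝕜 := ℝ)).mul_const (σ.real Set.univ)
  rw [zero_mul] at hlim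
  have := ge_of_tendsto' hlim hle
  exact norm_le_zero_iff.1 this

lemma exists_cover (K : Set ℝ) (hK : IsCompact K) (h0 : volume K = 0) (ε : ℝ) (hε : 0 < ε) :
    ∃ (t : Finset ℝ) (r : ℝ → ℝ), (∀ a ∈ t, a ∈ K ∧ 0 < r a) ∧
      (∀ x ∈ K, ∃ a ∈ t, |x - a| < r a) ∧ ∑ a ∈ t, r a ≤ ε := by
  obtain ⟨t, r, -, htK, hr, hcov, hsum⟩ := Besicovitch.exists_closedBall_covering_tsum_measure_le
    (volume : Measure ℝ) (ε := ENNReal.ofReal ε) (by simpa using hε) (fun _ => Set.Ioi 0) K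
    (fun x _ δ hδ => ⟨δ / 2, by simp only [Set.mem_inter_iff, Set.mem_Ioi, Set.mem_Ioo]; constructor <;> [skip; constructor] <;> linarith⟩)
  have hr' : ∀ x ∈ t, 0 < r x := hr
  obtain ⟨b, hbt, hbf, hbK⟩ := hK.elim_finite_subcover_image (b := t)
    (c := fun x => Metric.ball x (2 * r x)) (fun _ _ => Metric.isOpen_ball) (by
      intro x hx
      have := hcov hx
      simp only [Set.mem_iUnion] at this ⊢
      obtain ⟨i, hi, hxi⟩ := this
      exact ⟨i, hi, Metric.closedBall_subset_ball (by linarith [hr' i hi]) hxi⟩)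
  refine ⟨hbf.toFinset, fun x => 2 * r x, ?_, ?_, ?_⟩
  · intro a ha
    have : a ∈ b := by simpa using ha
    exact ⟨htK (hbt this), by linarith [hr' a (hbt this)]⟩
  · intro x hx
    have := hbK hx
    simp only [Set.mem_iUnion] at this
    obtain ⟨i, hi, hxi⟩ := this
    exact ⟨i, by simpa using hi, by simpa [Real.dist_eq] using hxi⟩
  · rw [h0, zero_add] at hsum
    have hnn : ∀ a ∈ hbf.toFinset, 0 ≤ 2 * r a := by
      intro a ha
      have : a ∈ b := by simpa using ha
      linarith [hr' a (hbt this)]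
    rw [← ENNReal.ofReal_le_ofReal_iff hε.le, ENNReal.ofReal_sum_of_nonneg hnn]
    refine le_trans ?_ hsum
    rw [tsum_subtype t (fun x => volume (Metric.closedBall x (r x)))]
    refine le_trans (Finset.sum_le_sum (fun a ha => ?_)) (ENNReal.sum_le_tsum hbf.toFinset)
    have : a ∈ b := by simpa using ha
    rw [Set.indicator_of_mem (hbt this), Real.volume_closedBall]

lemma frac_re (M r a x : ℝ) :
    ((Complex.I * (M * r : ℝ)) / ((a : ℂ) - Complex.I * (r : ℂ) - (x : ℂ))).re =
      -(M * (r ^ 2 / ((x - a) ^ 2 + r ^ 2))) := by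
  rw [Complex.div_re]
  simp [Complex.normSq_apply]
  ring

lemma integral_compact_eq_zero {σ : Measure ℝ} [IsFiniteMeasure σ] {g : ℝ → ℂ}
    (hg : GoodDensity σ g) (K : Set ℝ) (hK : IsCompact K) (h0 : volume K = 0) :
    ∫ x in K, g x ∂σ = 0 := by
  obtain ⟨hm, ⟨B, hB⟩, hz⟩ := id hg
  have hB0 : 0 ≤ B := (norm_nonneg _).trans (hB 0)
  have hN : ∀ n : ℕ, (0 : ℝ) < (n : ℝ) + 1 := fun n => by positivity
  choose t r htr hcov hsum using fun n : ℕ =>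
    exists_cover K hK h0 (1 / ((n : ℝ) + 1) ^ 2) (by have := hN n; positivity)
  let c : ℕ → ℝ → ℂ := fun n a => Complex.I * (((n : ℝ) + 1) * r n a : ℝ)
  let lam : ℕ → ℝ → ℂ := fun n a => (a : ℂ) - Complex.I * (r n a : ℂ)
  let G : ℕ → ℝ → ℂ := fun n => fracSum (t n) (c n) (lam n)
  have hlam : ∀ n, ∀ a ∈ t n, (lam n a).im < 0 := by
    intro n a ha
    have := (htr n a ha).2
    simpa [lam] using this
  have hre : ∀ n x, (G n x).re =
      -∑ a ∈ t n, ((n : ℝ) + 1) * (r n a ^ 2 / ((x - a) ^ 2 + r n a ^ 2)) := by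
    intro n x
    simp only [G, fracSum, Complex.re_sum, c, lam]
    rw [← Finset.sum_neg_distrib]
    exact Finset.sum_congr rfl (fun a _ => frac_re _ _ _ _)
  have hterm : ∀ (n : ℕ) (x a : ℝ), 0 ≤ ((n : ℝ) + 1) * (r n a ^ 2 / ((x - a) ^ 2 + r n a ^ 2)) := by
    intro n x a
    have := hN n
    positivity
  have hre0 : ∀ n x, (G n x).re ≤ 0 := by
    intro n x
    rw [hre]
    have := Finset.sum_nonneg (fun a (_ : a ∈ t n) => hterm n x a)
    linarith
  have hreK : ∀ n, ∀ x ∈ K, (G n x).re ≤ -(((n : ℝ) + 1) / 2) := by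
    intro n x hx
    obtain ⟨a, ha, hxa⟩ := hcov n x hx
    have h1 := Finset.single_le_sum (fun a (_ : a ∈ t n) => hterm n x a) ha
    rw [hre]
    have hr := (htr n a ha).2
    have h2 : (1 : ℝ) / 2 ≤ r n a ^ 2 / ((x - a) ^ 2 + r n a ^ 2) := by
      rw [div_le_div_iff₀ (by norm_num) (by positivity)]
      have : (x - a) ^ 2 < r n a ^ 2 := sq_lt_sq' (by linarith [neg_abs_le (x - a)])
        (by linarith [le_abs_self (x - a)])
      linarith
    have h3 := mul_le_mul_of_nonneg_left h2 (hN n).le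
    linarith
  have hoff : ∀ x, x ∉ K → Filter.Tendsto (fun n => G n x) Filter.atTop (nhds 0) := by
    intro x hx
    obtain ⟨d, hd, hdK⟩ : ∃ d > 0, ∀ a ∈ K, d ≤ |a - x| := by
      obtain ⟨d, hd, hsub⟩ := Metric.isOpen_iff.1 hK.isClosed.isOpen_compl x hx
      refine ⟨d, hd, fun a ha => ?_⟩
      by_contra hlt
      exact hsub (by simpa [Real.dist_eq] using hlt : a ∈ Metric.ball x d) ha
    have hle : ∀ n, ‖G n x‖ ≤ (1 / ((n : ℝ) + 1)) * (1 / d) := by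
      intro n
      have hn := hN n
      have : ‖G n x‖ ≤ ∑ a ∈ t n, (((n : ℝ) + 1) / d) * r n a := by
        refine (norm_sum_le _ _).trans (Finset.sum_le_sum fun a ha => ?_)
        obtain ⟨haK, hra⟩ := htr n a ha
        have h1 : d ≤ ‖lam n a - (x : ℂ)‖ := by
          refine (hdK a haK).trans ?_
          have := Complex.abs_re_le_norm (lam n a - (x : ℂ))
          simpa [lam] using this
        have h2 : ‖c n a‖ = ((n : ℝ) + 1) * r n a := by
          simp only [c, norm_mul, Complex.norm_I, one_mul, Complex.norm_real, Real.norm_eq_abs]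
          rw [abs_of_pos hra, abs_of_pos hn]
        rw [norm_div, h2, div_mul_eq_mul_div]
        exact div_le_div_of_nonneg_left (by positivity) hd h1
      rw [← Finset.mul_sum] at this
      refine this.trans ((mul_le_mul_of_nonneg_left (hsum n) (by positivity)).trans (le_of_eq ?_))
      field_simp
    have hlim := (tendsto_one_div_add_atTop_nhds_zero_nat (𝕜 := ℝ)).mul_const (1 / d)
    rw [zero_mul] at hlim
    exact squeeze_zero_norm hle hlim
  have hlim := tendsto_integral_of_dominated_convergence (μ := σ)
    (F := fun n x => g x * Complex.exp (G n x)) (f := Kᶜ.indicator g) (fun _ => B)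
    (fun n => (hm.mul (Complex.measurable_exp.comp
      (meas_fracSum (t n) (c n) (lam n)))).aestronglyMeasurable)
    (integrable_const _)
    (fun n => Filter.Eventually.of_forall (fun x => by
      rw [norm_mul, Complex.norm_exp]
      have h1 : Real.exp (G n x).re ≤ 1 := Real.exp_le_one_iff.2 (hre0 n x)
      exact (mul_le_of_le_one_right (norm_nonneg _) h1).trans (hB x)))
    (Filter.Eventually.of_forall (fun x => by
      by_cases hx : x ∈ K
      · rw [Set.indicator_of_notMem (by simpa using hx)]
        have hnorm : Filter.Tendsto (fun n => Complex.exp (G n x)) Filter.atTop (nhds 0) := by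
          have hle : ∀ n, ‖Complex.exp (G n x)‖ ≤ Real.exp (-(((n : ℝ) + 1) / 2)) := by
            intro n
            rw [Complex.norm_exp]
            exact Real.exp_le_exp.2 (hreK n x hx)
          refine squeeze_zero_norm hle (Real.tendsto_exp_neg_atTop_nhds_zero.comp ?_)
          exact (Filter.tendsto_atTop_add_const_right _ _
            tendsto_natCast_atTop_atTop).atTop_div_const (by norm_num)
        simpa using hnorm.const_mul (g x)
      · rw [Set.indicator_of_mem (by simpa using hx)]
        have := ((Complex.continuous_exp.tendsto 0).comp (hoff x hx)).const_mul (g x)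
        simpa using this))
  have hconst : ∀ n, ∫ x, g x * Complex.exp (G n x) ∂σ = ∫ x, g x ∂σ := fun n =>
    hg.integral_exp (t n) (c n) (lam n) (hlam n)
  simp only [hconst] at hlim
  have heq := tendsto_nhds_unique hlim tendsto_const_nhds
  rw [integral_indicator hK.measurableSet.compl] at heq
  have hsplit := integral_add_compl hK.measurableSet (integrable_bdd σ hm hB)
  rw [heq] at hsplit
  simpa using hsplit



/-- Let `ν = g·σ` be a finite complex Borel measure on `ℝ` (with `σ` a finite positive measure
and `g` a bounded measurable density) such that `∫ (λ − x)⁻² dν(x) = 0` for every `λ` in the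
open lower half-plane.  Then `ν` is absolutely continuous with respect to Lebesgue measure:
`ν(Δ) = 0` for every Borel set `Δ` of Lebesgue measure zero. -/
theorem absolutelyContinuous_of_vanishing_cauchy_transform
    (σ : Measure ℝ) [IsFiniteMeasure σ] (g : ℝ → ℂ) (hg : Measurable g)
    (hgbd : ∀ x, ‖g x‖ ≤ 1)
    (hcauchy : ∀ lam : ℂ, lam.im < 0 → ∫ x : ℝ, g x / (lam - (x : ℂ)) ^ 2 ∂σ = 0) :
    ∀ Δ : Set ℝ, MeasurableSet Δ → volume Δ = 0 → ∫ x in Δ, g x ∂σ = 0 := by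

  intro Δ hΔ hvol
  have hgood := good_of_sq σ g hg hgbd hcauchy
  have hint := integrable_bdd σ hg hgbd
  rw [← norm_le_zero_iff]
  refine le_of_forall_pos_le_add (fun ε hε => ?_)
  obtain ⟨K, hKΔ, hK, hlt⟩ := hΔ.exists_isCompact_sdiff_lt (μ := σ) (measure_ne_top σ Δ)
    (ε := ENNReal.ofReal ε) (by simpa using hε)
  have h0 := integral_compact_eq_zero hgood K hK (measure_mono_null hKΔ hvol)
  have hd := setIntegral_sdiff hK.measurableSet hint.integrableOn hKΔ
  rw [h0, sub_zero] at hd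
  rw [← hd, zero_add]
  refine (norm_setIntegral_le_of_norm_le_const (C := 1) (measure_lt_top σ _)
    (fun x _ => hgbd x)).trans ?_
  rw [one_mul]
  exact ENNReal.toReal_le_of_le_ofReal hε.le hlt.le
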